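/- arXiv:1611.05248 — 2 statements merged into one kernel-verified Lean document; each statement's English description precedes it below -/
import Mathlib

section
/- Let G be a finite simple graph on vertex set V, partitioned into activated vertices V_on and deactivated vertices V_off, and let G_on = G[V_on] be the induced subgraph on the activated vertices. Let I ⊆ V_off be a set of vertices which is activated. Let u and v be two vertices of V_on that are not connected in G_on, and let C_u and C_v be their (distinct) connected components in G_on. Then u and v are connected (joined by a path) in the induced subgraph G[V_on ∪ I] if and only if C_u and C_v are connected by the set I. -/
/-!
Both directions are inductions along the given connection.

Let `C` be the component of `u` in `G[Von]`, and call `w` *linked to `C`* (`LinkedBy`) if it ends a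
sequence in `I` of the kind allowed in `connBySet`, starting next to `C`. Along a walk of
`G[Von ∪ I]` from `u`, every vertex of `I` is linked to `C`, and every vertex of `Von` either lies
in `C` or lies in a component adjacent to a linked vertex (`linkedBy_of_reachable`). At `v`, the
first alternative is excluded because `u` and `v` are not connected in `G[Von]`, and the second is
exactly `connBySet`.

Conversely, a vertex of `I` adjacent to a component of `G[Von]` is reachable in `G[Von ∪ I]` from
every vertex of that component (`reachable_of_adjComp`), so each vertex of the linking sequence is
reachable from `u`, and hence so is `v`.
-/

open SimpleGraph

variable {V : Type*}

/-- A vertex `w` is adjacent to a connected component `C` of the induced subgraph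
`G[Von]` if some vertex of `C` is joined to `w` by an edge of `G`. -/
def adjComp (G : SimpleGraph V) (Von : Set V) (w : V)
    (C : (G.induce Von).ConnectedComponent) : Prop :=
  ∃ x : Von, (G.induce Von).connectedComponentMk x = C ∧ G.Adj ↑x w

/-- Two vertices `x` and `y` are connected via a connected component of `G[Von]`
if there is a component of `G[Von]` adjacent to both, or `(x,y)` is an edge of `G`. -/
def connViaComp (G : SimpleGraph V) (Von : Set V) (x y : V) : Prop :=
  (∃ C, adjComp G Von x C ∧ adjComp G Von y C) ∨ G.Adj x y

/-- Two connected components `C₁`, `C₂` of `G[Von]` are connected by the set `I`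
if there is a sequence `v₀, …, v_k` of vertices of `I` with `v₀` adjacent to `C₁`,
`v_k` adjacent to `C₂`, and consecutive vertices connected via a connected component. -/
def connBySet (G : SimpleGraph V) (Von I : Set V)
    (C₁ C₂ : (G.induce Von).ConnectedComponent) : Prop :=
  ∃ (k : ℕ) (v : Fin (k + 1) → V),
    (∀ i, v i ∈ I) ∧
    adjComp G Von (v 0) C₁ ∧
    adjComp G Von (v (Fin.last k)) C₂ ∧
    ∀ i : Fin k, connViaComp G Von (v i.castSucc) (v i.succ)

/-- `w` is the last term of a sequence in `I` whose first term is adjacent to `C` and whose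
consecutive terms are connected via a component of `G[Von]`. -/
def LinkedBy (G : SimpleGraph V) (Von I : Set V) (C : (G.induce Von).ConnectedComponent)
    (w : V) : Prop :=
  ∃ (k : ℕ) (v : Fin (k + 1) → V),
    (∀ i, v i ∈ I) ∧ adjComp G Von (v 0) C ∧ v (Fin.last k) = w ∧
    ∀ i : Fin k, connViaComp G Von (v i.castSucc) (v i.succ)

lemma LinkedBy.of_adjComp {G : SimpleGraph V} {Von I : Set V}
    {C : (G.induce Von).ConnectedComponent} {w : V} (hw : w ∈ I) (h : adjComp G Von w C) :
    LinkedBy G Von I C w :=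
  ⟨0, fun _ => w, fun _ => hw, h, rfl, fun i => i.elim0⟩

lemma LinkedBy.step {G : SimpleGraph V} {Von I : Set V}
    {C : (G.induce Von).ConnectedComponent} {w w' : V} (h : LinkedBy G Von I C w)
    (hw' : w' ∈ I) (hc : connViaComp G Von w w') : LinkedBy G Von I C w' := by
  obtain ⟨k, v, hvI, h0, hl, hs⟩ := h
  refine ⟨k + 1, Fin.snoc (α := fun _ => V) v w', ?_, ?_, ?_, ?_⟩
  · intro i
    refine Fin.lastCases ?_ (fun i => ?_) i
    · simpa using hw'
    · simpa using hvI i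
  · have : (0 : Fin (k + 1 + 1)) = (0 : Fin (k + 1)).castSucc := rfl
    rw [this, Fin.snoc_castSucc]
    exact h0
  · simp
  · intro i
    refine Fin.lastCases ?_ (fun i => ?_) i
    · rw [Fin.snoc_castSucc, Fin.succ_last, Fin.snoc_last, hl]
      exact hc
    · rw [Fin.snoc_castSucc, Fin.succ_castSucc, Fin.snoc_castSucc]
      exact hs i

/-- The invariant along walks of `G[Von ∪ I]` starting at a vertex of `Von`. -/
lemma linkedBy_of_reachable {G : SimpleGraph V} {Von I : Set V} (hdisj : Disjoint Von I)
    {u : V} (hu : u ∈ Von) {w : ↥(Von ∪ I)}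
    (h : (G.induce (Von ∪ I)).Reachable ⟨u, Or.inl hu⟩ w) :
    (∀ hw : w.1 ∈ Von,
      (G.induce Von).connectedComponentMk ⟨w.1, hw⟩ =
          (G.induce Von).connectedComponentMk ⟨u, hu⟩ ∨
        ∃ t, LinkedBy G Von I ((G.induce Von).connectedComponentMk ⟨u, hu⟩) t ∧
          adjComp G Von t ((G.induce Von).connectedComponentMk ⟨w.1, hw⟩)) ∧
    (w.1 ∈ I → LinkedBy G Von I ((G.induce Von).connectedComponentMk ⟨u, hu⟩) w.1) := by
  rw [SimpleGraph.reachable_iff_reflTransGen] at h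
  induction h with
  | refl =>
    exact ⟨fun _ => Or.inl rfl, fun hI => (Set.disjoint_left.mp hdisj hu hI).elim⟩
  | @tail b c _ hbc ih =>
    obtain ⟨ihon, ihI⟩ := ih
    have hadj : G.Adj b.1 c.1 := hbc
    rcases b.2 with hb | hb
    · constructor
      · intro hc
        have hbc' : (G.induce Von).connectedComponentMk ⟨c.1, hc⟩ =
            (G.induce Von).connectedComponentMk ⟨b.1, hb⟩ := by
          apply ConnectedComponent.sound
          apply Adj.reachable
          exact hadj.symm
        rw [hbc']
        exact ihon hb
      · intro hc
        rcases ihon hb with h | ⟨t, ht, hta⟩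
        · exact .of_adjComp hc ⟨⟨b.1, hb⟩, h, hadj⟩
        · exact ht.step hc (Or.inl ⟨_, hta, ⟨b.1, hb⟩, rfl, hadj⟩)
    · exact ⟨fun hc => Or.inr ⟨b.1, ihI hb, ⟨c.1, hc⟩, rfl, hadj.symm⟩,
        fun hc => (ihI hb).step hc (Or.inr hadj)⟩

lemma reachable_of_adjComp {G : SimpleGraph V} {Von I : Set V} {a : V} (ha : a ∈ I)
    {x : Von} (h : adjComp G Von a ((G.induce Von).connectedComponentMk x)) :
    (G.induce (Von ∪ I)).Reachable ⟨x.1, Or.inl x.2⟩ ⟨a, Or.inr ha⟩ := by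
  obtain ⟨y, hy, hya⟩ := h
  have hxy : (G.induce Von).Reachable x y := ConnectedComponent.exact hy.symm
  have h1 := hxy.map (G.induceHomOfLE (Set.subset_union_left (s := Von) (t := I))).toHom
  refine Reachable.trans h1 (Adj.reachable ?_)
  exact hya

theorem stmt0 [Fintype V] (G : SimpleGraph V) (Von Voff : Set V)
    (hdisj : Disjoint Von Voff) (hcover : Von ∪ Voff = Set.univ)
    (I : Set V) (hI : I ⊆ Voff)
    (u v : V) (hu : u ∈ Von) (hv : v ∈ Von)
    (hnc : ¬ (G.induce Von).Reachable ⟨u, hu⟩ ⟨v, hv⟩) :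
    (G.induce (Von ∪ I)).Reachable ⟨u, Or.inl hu⟩ ⟨v, Or.inl hv⟩ ↔
      connBySet G Von I ((G.induce Von).connectedComponentMk ⟨u, hu⟩)
        ((G.induce Von).connectedComponentMk ⟨v, hv⟩) := by
  have hdI : Disjoint Von I := hdisj.mono_right hI
  constructor
  · intro h
    rcases (linkedBy_of_reachable hdI hu h).1 hv with h | ⟨t, ⟨k, s, hsI, h0, rfl, hs⟩, hta⟩
    · exact (hnc (ConnectedComponent.exact h.symm)).elim
    · exact ⟨k, s, hsI, h0, hta, hs⟩
  · rintro ⟨k, s, hsI, h0, hl, hs⟩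
    have key : ∀ i, (G.induce (Von ∪ I)).Reachable ⟨u, Or.inl hu⟩ ⟨s i, Or.inr (hsI i)⟩ := by
      intro i
      induction i using Fin.induction with
      | zero => exact reachable_of_adjComp (hsI 0) h0
      | succ i ih =>
        refine ih.trans ?_
        rcases hs i with ⟨C, h1, h2⟩ | hadj
        · induction C using ConnectedComponent.ind with
          | h x =>
            exact (reachable_of_adjComp (hsI _) h1).symm.trans (reachable_of_adjComp (hsI _) h2)
        · apply Adj.reachable
          exact hadj
    exact (key (Fin.last k)).trans (reachable_of_adjComp (hsI _) hl).symm
end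

section
/- Let G be a finite simple graph on vertex set V, partitioned into activated vertices V_on and deactivated vertices V_off, and let G_on = G[V_on]. Let I ⊆ V_off, and let u and v be two vertices of V_on lying in distinct connected components C_u ≠ C_v of G_on. If u and v are connected by a path in the induced subgraph G[V_on ∪ I], then C_u and C_v are connected by the set I. -/
/-! Follow a walk from `u` to `v` in `G[Von ∪ I]` and record the vertices of `I` it meets.
Two consecutive recorded vertices are either joined by an edge or separated by a stretch of
activated vertices, which stays inside one component of `G[Von]` adjacent to both. The first and
last recorded vertices are adjacent to the components of `u` and `v`. If none is recorded, the walk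
stays in one component, which `hne` excludes.

The bookkeeping is the invariant `WalkInv`, preserved by each edge (`WalkInv.step`). -/

open SimpleGraph

variable {V : Type*}

/-- The vertex `w` ends a sequence of vertices of `I` that starts next to the component `C` and
whose consecutive vertices are connected via a component. It is `connBySet` with the final
adjacency to `C₂` left out, so that sequences can be built one vertex at a time. -/
def ChainTo (G : SimpleGraph V) (Von I : Set V)
    (C : (G.induce Von).ConnectedComponent) (w : V) : Prop :=
  ∃ (k : ℕ) (v : Fin (k + 1) → V),
    (∀ i, v i ∈ I) ∧
    adjComp G Von (v 0) C ∧
    v (Fin.last k) = w ∧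
    ∀ i : Fin k, connViaComp G Von (v i.castSucc) (v i.succ)

theorem ChainTo.single {G : SimpleGraph V} {Von I : Set V}
    {C : (G.induce Von).ConnectedComponent} {w : V} (hw : w ∈ I) (h : adjComp G Von w C) :
    ChainTo G Von I C w :=
  ⟨0, fun _ => w, fun _ => hw, h, rfl, fun i => i.elim0⟩

theorem ChainTo.extend {G : SimpleGraph V} {Von I : Set V}
    {C : (G.induce Von).ConnectedComponent} {w y : V} (h : ChainTo G Von I C w)
    (hy : y ∈ I) (hwy : connViaComp G Von w y) : ChainTo G Von I C y := by
  obtain ⟨k, v, hvI, h0, hl, hs⟩ := h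
  refine ⟨k + 1, Fin.snoc (α := fun _ => V) v y, ?_, ?_, ?_, ?_⟩
  · intro i
    refine Fin.lastCases ?_ (fun j => ?_) i
    · simpa using hy
    · simpa using hvI j
  · have : (0 : Fin (k + 1 + 1)) = Fin.castSucc 0 := rfl
    rw [this, Fin.snoc_castSucc]
    exact h0
  · simp
  · intro i
    refine Fin.lastCases ?_ (fun j => ?_) i
    · rw [Fin.snoc_castSucc, Fin.succ_last, Fin.snoc_last, hl]
      exact hwy
    · rw [Fin.snoc_castSucc, Fin.succ_castSucc, Fin.snoc_castSucc]
      exact hs j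

/-- The invariant along a walk in `G[Von ∪ I]` starting in the component `C`: an activated vertex
lies in `C` or in a component adjacent to the end of a chain from `C`, and a vertex of `I` is itself
the end of such a chain. -/
def WalkInv (G : SimpleGraph V) (Von I : Set V)
    (C : (G.induce Von).ConnectedComponent) (x : V) : Prop :=
  (∀ hx : x ∈ Von, (G.induce Von).connectedComponentMk ⟨x, hx⟩ = C ∨
    ∃ t, ChainTo G Von I C t ∧
      adjComp G Von t ((G.induce Von).connectedComponentMk ⟨x, hx⟩)) ∧
  (x ∈ I → ChainTo G Von I C x)

theorem WalkInv.step {G : SimpleGraph V} {Von I : Set V}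
    {C : (G.induce Von).ConnectedComponent} {x y : V} (h : WalkInv G Von I C x)
    (hx : x ∈ Von ∪ I) (hxy : G.Adj x y) : WalkInv G Von I C y := by
  refine ⟨fun hy => ?_, fun hy => ?_⟩
  · rcases hx with hx | hx
    · have hcomp : (G.induce Von).connectedComponentMk ⟨y, hy⟩ =
          (G.induce Von).connectedComponentMk ⟨x, hx⟩ := by
        apply ConnectedComponent.sound
        apply Adj.reachable
        exact hxy.symm
      rw [hcomp]
      exact h.1 hx
    · exact Or.inr ⟨x, h.2 hx, ⟨y, hy⟩, rfl, hxy.symm⟩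
  · rcases hx with hx | hx
    · rcases h.1 hx with hC | ⟨t, ht, hadj⟩
      · exact ChainTo.single hy ⟨⟨x, hx⟩, hC, hxy⟩
      · exact ht.extend hy (Or.inl ⟨_, hadj, ⟨x, hx⟩, rfl, hxy⟩)
    · exact (h.2 hx).extend hy (Or.inr hxy)

theorem WalkInv.walk {G : SimpleGraph V} {Von I : Set V}
    {C : (G.induce Von).ConnectedComponent} {a b : ↥(Von ∪ I)}
    (p : (G.induce (Von ∪ I)).Walk a b) (h : WalkInv G Von I C a) : WalkInv G Von I C b := by
  induction p with
  | nil => exact h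
  | @cons a c _ hadj _ ih => exact ih (h.step a.2 hadj)

theorem stmt1 [Fintype V] (G : SimpleGraph V) (Von Voff : Set V)
    (hdisj : Disjoint Von Voff) (hcover : Von ∪ Voff = Set.univ)
    (I : Set V) (hI : I ⊆ Voff)
    (u v : V) (hu : u ∈ Von) (hv : v ∈ Von)
    (hne : (G.induce Von).connectedComponentMk ⟨u, hu⟩ ≠
      (G.induce Von).connectedComponentMk ⟨v, hv⟩)
    (hreach : (G.induce (Von ∪ I)).Reachable ⟨u, Or.inl hu⟩ ⟨v, Or.inl hv⟩) :
    connBySet G Von I ((G.induce Von).connectedComponentMk ⟨u, hu⟩)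
      ((G.induce Von).connectedComponentMk ⟨v, hv⟩) := by
  obtain ⟨p⟩ := hreach
  have hstart : WalkInv G Von I ((G.induce Von).connectedComponentMk ⟨u, hu⟩) u :=
    ⟨fun _ => Or.inl rfl,
      fun huI => (Set.disjoint_left.mp hdisj hu (hI huI)).elim⟩
  rcases (WalkInv.walk p hstart).1 hv with heq | ⟨t, ⟨k, w, hwI, h0, hl, hs⟩, hadj⟩
  · exact (hne heq.symm).elim
  · exact ⟨k, w, hwI, h0, hl ▸ hadj, hs⟩
end
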